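/- The generating set {a₁, a₂, a₃, b, c₁, c₂, c₃, c₄, c₅, c₆, d₁, d₂, d₃, y₁y₂y₃} of R^G is minimal: for every element z of this fourteen-element set, z does not belong to the 𝔽₃-subalgebra of R generated by the remaining thirteen elements. -/

import Mathlib

open Matrix MvPolynomial

set_option synthInstance.maxHeartbeats 1000000
set_option maxHeartbeats 1000000

abbrev F3 : Type := ZMod 3
abbrev G3 : Type := Matrix.SpecialLinearGroup (Fin 2) F3
abbrev S3 : Type := MvPolynomial (Fin 3) F3

/-- The fixed basis `v₁, v₂, v₃` of the traceless `2 × 2` matrices over `𝔽₃`. -/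
def V : Fin 3 → Matrix (Fin 2) (Fin 2) F3 :=
  ![!![0, 1; -1, 0], !![-1, -1; -1, 1], !![1, -1; -1, -1]]

/-- Coordinates of a traceless matrix with respect to the basis `v₁, v₂, v₃`. -/
def coordM : Fin 3 → Matrix (Fin 2) (Fin 2) F3 → F3 :=
  ![fun X => X 1 0 - X 0 1, fun X => X 0 0 - X 0 1 - X 1 0, fun X => -(X 0 0 + X 0 1 + X 1 0)]

/-- Matrix of the (dual) action of `g` on `M*`: `g • x_s = ∑ r, (rep g) s r • x_r`, where
`(rep g) s r = x_s (g⁻¹ • v_r) = coordM s (g⁻¹ vᵣ g)`, coming from `(g • f)(v) = f(g⁻¹ • v)`. -/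
def rep (g : G3) : Matrix (Fin 3) (Fin 3) F3 :=
  Matrix.of fun s r => coordM s ((g⁻¹ : G3) * V r * (g : Matrix (Fin 2) (Fin 2) F3))

/-- The action of `g ∈ SL₂(𝔽₃)` on `S = 𝔽₃[x₁,x₂,x₃]` by algebra automorphisms, given by
substituting `x_s ↦ g • x_s = ∑ r, (rep g) s r • x_r`. -/
noncomputable def actS (g : G3) : S3 →ₐ[F3] S3 :=
  MvPolynomial.aeval fun s => ∑ r : Fin 3, rep g s r • MvPolynomial.X r

noncomputable def a1 : S3 := X 0 ^ 2 + X 1 ^ 2 + X 2 ^ 2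
noncomputable def a2 : S3 := X 0 * X 1 * X 2
noncomputable def a3 : S3 := X 0 ^ 4 + X 1 ^ 4 + X 2 ^ 4
noncomputable def bP : S3 := X 0 ^ 4 * X 1 ^ 2 + X 0 ^ 2 * X 2 ^ 4 + X 1 ^ 4 * X 2 ^ 2
noncomputable def av : Fin 3 → S3 := ![a1, a2, a3]

def tm : G3 := ⟨!![1, 1; 0, 1], by decide⟩
def im : G3 := ⟨!![0, 1; -1, 0], by decide⟩
def jm : G3 := ⟨!![1, -1; -1, -1], by decide⟩

/-- The quaternion subgroup `H = ⟨i, j⟩ ≅ Q₈` of `SL₂(𝔽₃)`. -/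
def H3 : Subgroup G3 := Subgroup.closure {im, jm}

/-- The character with `χ(±e) = χ(±i) = 1` and `χ(±j) = χ(±k) = -1` (its values off the
set `{±e, ±i}` are `-1`; only the restriction to `H` is ever used). -/
def chi (g : G3) : F3 :=
  if (g : Matrix (Fin 2) (Fin 2) F3) = 1 ∨ (g : Matrix (Fin 2) (Fin 2) F3) = -1 ∨
     (g : Matrix (Fin 2) (Fin 2) F3) = (im : Matrix (Fin 2) (Fin 2) F3) ∨
     (g : Matrix (Fin 2) (Fin 2) F3) = -(im : Matrix (Fin 2) (Fin 2) F3) then 1 else -1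

/-- The `𝔽₃`-submodule `S^H_χ` of `χ`-relative `H`-invariants in `S`. -/
noncomputable def relInv : Submodule F3 S3 where
  carrier := {f | ∀ h ∈ H3, actS h f = chi h • f}
  add_mem' := by
    intro f g hf hg h hh
    rw [map_add, hf h hh, hg h hh, smul_add]
  zero_mem' := by
    intro h hh
    rw [map_zero, smul_zero]
  smul_mem' := by
    intro c f hf h hh
    rw [_root_.map_smul, hf h hh, smul_comm]

open TensorProduct

/-- The exterior algebra `Λ(M*)` on `y₁, y₂, y₃` (with `M*` in dual-basis coordinates). -/
abbrev Lam : Type := ExteriorAlgebra F3 (Fin 3 → F3)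

/-- `y_s = dx_s`, the exterior generators. -/
noncomputable def yy (s : Fin 3) : Lam := ExteriorAlgebra.ι F3 (Pi.single s 1)

/-- The linear action of `g` on the coordinate space of `y₁, y₂, y₃`:
`y_s ↦ ∑ r, (rep g) s r • y_r`. -/
noncomputable def repL (g : G3) : (Fin 3 → F3) →ₗ[F3] (Fin 3 → F3) :=
  Matrix.toLin' (rep g)ᵀ

/-- The algebra of differential forms `R = S ⊗ Λ(M*)`: the graded-commutative `𝔽₃`-algebra
generated by the central `x₁, x₂, x₃` and the anticommuting `y₁, y₂, y₃`. -/
abbrev Rf : Type := S3 ⊗[F3] Lam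

/-- The action of `g ∈ SL₂(𝔽₃)` on `R` by ring automorphisms, acting on `x`'s as on `S`
and on `y₁, y₂, y₃` by the same matrices as on `x₁, x₂, x₃`. -/
noncomputable def actR (g : G3) : Rf →ₐ[F3] Rf :=
  Algebra.TensorProduct.map (actS g) (ExteriorAlgebra.map (repL g))

noncomputable def c1 : Rf := X 0 ⊗ₜ[F3] yy 0 + X 1 ⊗ₜ[F3] yy 1 + X 2 ⊗ₜ[F3] yy 2
noncomputable def c2 : Rf :=
  (X 1 * X 2) ⊗ₜ[F3] yy 0 + (X 2 * X 0) ⊗ₜ[F3] yy 1 + (X 0 * X 1) ⊗ₜ[F3] yy 2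
noncomputable def c3 : Rf :=
  (X 0 ^ 3) ⊗ₜ[F3] yy 0 + (X 1 ^ 3) ⊗ₜ[F3] yy 1 + (X 2 ^ 3) ⊗ₜ[F3] yy 2
noncomputable def c4 : Rf :=
  (X 0 * X 1 ^ 2) ⊗ₜ[F3] yy 0 + (X 1 * X 2 ^ 2) ⊗ₜ[F3] yy 1 + (X 2 * X 0 ^ 2) ⊗ₜ[F3] yy 2
noncomputable def c5 : Rf :=
  (X 1 ^ 3 * X 2) ⊗ₜ[F3] yy 0 + (X 2 ^ 3 * X 0) ⊗ₜ[F3] yy 1 + (X 0 ^ 3 * X 1) ⊗ₜ[F3] yy 2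
noncomputable def c6 : Rf :=
  (X 0 ^ 3 * X 1 ^ 2) ⊗ₜ[F3] yy 0 + (X 1 ^ 3 * X 2 ^ 2) ⊗ₜ[F3] yy 1 +
    (X 2 ^ 3 * X 0 ^ 2) ⊗ₜ[F3] yy 2

noncomputable def d1 : Rf :=
  X 0 ⊗ₜ[F3] (yy 1 * yy 2) + X 1 ⊗ₜ[F3] (yy 2 * yy 0) + X 2 ⊗ₜ[F3] (yy 0 * yy 1)
noncomputable def d2 : Rf :=
  (X 1 * X 2) ⊗ₜ[F3] (yy 1 * yy 2) + (X 2 * X 0) ⊗ₜ[F3] (yy 2 * yy 0) +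
    (X 0 * X 1) ⊗ₜ[F3] (yy 0 * yy 1)
noncomputable def d3 : Rf :=
  (X 0 ^ 3) ⊗ₜ[F3] (yy 1 * yy 2) + (X 1 ^ 3) ⊗ₜ[F3] (yy 2 * yy 0) +
    (X 2 ^ 3) ⊗ₜ[F3] (yy 0 * yy 1)
noncomputable def d4 : Rf :=
  (X 0 * X 1 ^ 2) ⊗ₜ[F3] (yy 1 * yy 2) + (X 1 * X 2 ^ 2) ⊗ₜ[F3] (yy 2 * yy 0) +
    (X 2 * X 0 ^ 2) ⊗ₜ[F3] (yy 0 * yy 1)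
noncomputable def d5 : Rf :=
  (X 1 ^ 3 * X 2) ⊗ₜ[F3] (yy 1 * yy 2) + (X 2 ^ 3 * X 0) ⊗ₜ[F3] (yy 2 * yy 0) +
    (X 0 ^ 3 * X 1) ⊗ₜ[F3] (yy 0 * yy 1)
noncomputable def d6 : Rf :=
  (X 0 ^ 3 * X 1 ^ 2) ⊗ₜ[F3] (yy 1 * yy 2) + (X 1 ^ 3 * X 2 ^ 2) ⊗ₜ[F3] (yy 2 * yy 0) +
    (X 2 ^ 3 * X 0 ^ 2) ⊗ₜ[F3] (yy 0 * yy 1)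

/-- The top form `y₁y₂y₃`. -/
noncomputable def y123 : Lam := yy 0 * yy 1 * yy 2

/-- The fourteen generators `a₁, a₂, a₃, b, c₁, …, c₆, d₁, d₂, d₃, y₁y₂y₃`,
viewed as elements of `R`. -/
noncomputable def gens : Fin 14 → Rf :=
  ![a1 ⊗ₜ[F3] (1 : Lam), a2 ⊗ₜ[F3] (1 : Lam), a3 ⊗ₜ[F3] (1 : Lam), bP ⊗ₜ[F3] (1 : Lam),
    c1, c2, c3, c4, c5, c6, d1, d2, d3, (1 : S3) ⊗ₜ[F3] y123]

/-!
The subalgebra generated by some of the generators is spanned by `1`, these generators and their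
products with at least two factors. So a generator `g` is not a polynomial in the others as soon as
some linear functional on `R` kills `1`, the other generators and `gⱼ gₖ R` for all generators
`gⱼ, gₖ`, but not `g` itself.

For `g` of form degree `0, 1, 2, 3` the functional first extracts the coefficient in `S` of `1`,
`y₁`, `y₂y₃` or `y₁y₂y₃` respectively, and then takes a linear combination of coefficients of
monomials in `x₁, x₂, x₃`. Comparing form degrees, this combination has to kill: the square of the
ideal `(a₁, a₂, a₃, b)` of `S` in degree `0`; that ideal in degree `1`; that ideal and the
`y₂y₃`-coefficients of all `cᵢcⱼ` in degree `2`; and all polynomials without constant term in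
degree `3`. In the `x`-degree of `g` these are finitely many linear conditions over `𝔽₃`, which the
combinations below solve.
-/

section Adjoin

variable {K A N : Type*} [CommSemiring K] [Semiring A] [Algebra K A] [AddCommMonoid N] [Module K N]

theorem toSubmodule_adjoin_le_ker {s : Set A} (φ : A →ₗ[K] N) (map_one : φ 1 = 0)
    (map_mem : ∀ x ∈ s, φ x = 0) (map_mul_mul : ∀ x ∈ s, ∀ y ∈ s, ∀ z, φ (x * y * z) = 0) :
    (Algebra.adjoin K s).toSubmodule ≤ LinearMap.ker φ := by
  rw [Algebra.adjoin_eq_span, Submodule.span_le]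
  intro w hw
  induction hw using Submonoid.closure_induction_left with
  | one => exact map_one
  | mul_left x hx w hw _ =>
    induction hw using Submonoid.closure_induction_left with
    | one => simpa using map_mem x hx
    | mul_left y hy z _ _ => simpa [mul_assoc] using map_mul_mul x hx y hy z

theorem notMem_adjoin_ne_of_dual {ι : Type*} {g : ι → A} {i : ι} (φ : A →ₗ[K] N)
    (map_one : φ 1 = 0) (map_ne : ∀ j ≠ i, φ (g j) = 0)
    (map_mul_mul : ∀ j k z, φ (g j * g k * z) = 0) (map_self : φ (g i) ≠ 0) :
    g i ∉ Algebra.adjoin K {x | ∃ j, j ≠ i ∧ x = g j} := by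
  refine fun h ↦ map_self (toSubmodule_adjoin_le_ker φ map_one ?_ ?_ h)
  · rintro _ ⟨j, hj, rfl⟩
    exact map_ne j hj
  · rintro _ ⟨j, -, rfl⟩ _ ⟨k, -, rfl⟩ z
    exact map_mul_mul j k z

end Adjoin

section AlternatingCoeff

variable {K M : Type*} [CommRing K] [AddCommGroup M] [Module K M] {k n : ℕ}

/-- The extension by zero of the linear form on `⋀ᵏ M` corresponding to an alternating `k`-form `ω`
to the whole exterior algebra of `M`. -/
noncomputable def alternatingCoeff (ω : M [⋀^Fin k]→ₗ[K] K) : ExteriorAlgebra K M →ₗ[K] K :=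
  ExteriorAlgebra.liftAlternating (Pi.single k ω)

theorem alternatingCoeff_ιMulti (ω : M [⋀^Fin k]→ₗ[K] K) (v : Fin k → M) :
    alternatingCoeff ω (ExteriorAlgebra.ιMulti K k v) = ω v := by
  simp [alternatingCoeff, ExteriorAlgebra.liftAlternating_apply_ιMulti]

theorem alternatingCoeff_ιMulti_of_ne (ω : M [⋀^Fin k]→ₗ[K] K) (h : n ≠ k) (v : Fin n → M) :
    alternatingCoeff ω (ExteriorAlgebra.ιMulti K n v) = 0 := by
  simp [alternatingCoeff, ExteriorAlgebra.liftAlternating_apply_ιMulti, Pi.single_eq_of_ne h]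

theorem alternatingCoeff_ι_mul_of_zero (ω : M [⋀^Fin 0]→ₗ[K] K) (m : M) (u : ExteriorAlgebra K M) :
    alternatingCoeff ω (ExteriorAlgebra.ι K m * u) = 0 := by
  have h : (fun i ↦ ((Pi.single 0 ω : ∀ i, M [⋀^Fin i]→ₗ[K] K) (i + 1)).curryLeft m) = 0 := by
    funext i
    simp
  rw [alternatingCoeff, ExteriorAlgebra.liftAlternating_ι_mul, h, map_zero, LinearMap.zero_apply]

theorem alternatingCoeff_ι_mul (ω : M [⋀^Fin (k + 1)]→ₗ[K] K) (m : M) (u : ExteriorAlgebra K M) :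
    alternatingCoeff ω (ExteriorAlgebra.ι K m * u) = alternatingCoeff (ω.curryLeft m) u := by
  have h : (fun i ↦ ((Pi.single (k + 1) ω : ∀ i, M [⋀^Fin i]→ₗ[K] K) (i + 1)).curryLeft m) =
      Pi.single k (ω.curryLeft m) := by
    funext i
    obtain rfl | hi := eq_or_ne i k
    · simp
    · simp [Pi.single_eq_of_ne hi, Pi.single_eq_of_ne (show i + 1 ≠ k + 1 by simpa)]
  rw [alternatingCoeff, ExteriorAlgebra.liftAlternating_ι_mul, h, alternatingCoeff]

theorem alternatingCoeff_ιMulti_mul_of_lt (ω : M [⋀^Fin k]→ₗ[K] K) (h : k < n) (v : Fin n → M)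
    (u : ExteriorAlgebra K M) : alternatingCoeff ω (ExteriorAlgebra.ιMulti K n v * u) = 0 := by
  induction k generalizing n with
  | zero =>
    obtain ⟨n, rfl⟩ := Nat.exists_eq_add_of_lt h
    rw [ExteriorAlgebra.ιMulti_succ_apply, mul_assoc, alternatingCoeff_ι_mul_of_zero]
  | succ k ih =>
    obtain _ | n := n
    · simp at h
    · rw [ExteriorAlgebra.ιMulti_succ_apply, mul_assoc, alternatingCoeff_ι_mul,
        ih _ (by simpa using h)]

variable (K M) in
/-- The constant `1` as an alternating `0`-form. -/
abbrev unitForm : M [⋀^Fin 0]→ₗ[K] K := AlternatingMap.constOfIsEmpty K M (Fin 0) 1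

theorem alternatingCoeff_unitForm_one : alternatingCoeff (unitForm K M) 1 = 1 := by
  simpa using alternatingCoeff_ιMulti (unitForm K M) ![]

theorem alternatingCoeff_ιMulti_mul (ω : M [⋀^Fin k]→ₗ[K] K) (v : Fin k → M)
    (u : ExteriorAlgebra K M) :
    alternatingCoeff ω (ExteriorAlgebra.ιMulti K k v * u) =
      ω v * alternatingCoeff (unitForm K M) u := by
  induction k with
  | zero =>
    have h : ω = ω v • unitForm K M := by
      ext w
      simp [Subsingleton.elim w v]
    conv_lhs => rw [h]
    simp [alternatingCoeff, Pi.single_smul]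
  | succ k ih =>
    rw [ExteriorAlgebra.ιMulti_succ_apply, mul_assoc, alternatingCoeff_ι_mul, ih,
      AlternatingMap.curryLeft_apply_apply]
    congr 2
    exact Matrix.cons_head_tail v

end AlternatingCoeff

section Forms

variable {K S M : Type*} [CommRing K] [CommRing S] [Algebra K S] [AddCommGroup M] [Module K M]
  {k m n : ℕ}

/-- The `S`-linear extension of `alternatingCoeff ω` to forms with coefficients in `S`. -/
noncomputable def formCoeff (ω : M [⋀^Fin k]→ₗ[K] K) : S ⊗[K] ExteriorAlgebra K M →ₗ[S] S :=
  (AlgebraTensorModule.rid K S S).toLinearMap ∘ₗ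
    AlgebraTensorModule.lTensor S S (alternatingCoeff ω)

theorem formCoeff_tmul (ω : M [⋀^Fin k]→ₗ[K] K) (p : S) (u : ExteriorAlgebra K M) :
    formCoeff ω (p ⊗ₜ[K] u) = alternatingCoeff ω u • p := by
  simp [formCoeff]

theorem formCoeff_tmul_mul (ω : M [⋀^Fin k]→ₗ[K] K) (p : S) (u : ExteriorAlgebra K M)
    (z : S ⊗[K] ExteriorAlgebra K M) :
    formCoeff ω (p ⊗ₜ u * z) = p * formCoeff ω ((1 ⊗ₜ u) * z) := by
  have h : p ⊗ₜ[K] u = p • (1 ⊗ₜ[K] u) := by rw [TensorProduct.smul_tmul', smul_eq_mul, mul_one]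
  rw [h, smul_mul_assoc, map_smul, smul_eq_mul]

theorem formCoeff_tmul_one_mul (ω : M [⋀^Fin k]→ₗ[K] K) (p : S) (z : S ⊗[K] ExteriorAlgebra K M) :
    formCoeff ω (p ⊗ₜ 1 * z) = p * formCoeff ω z := by
  rw [formCoeff_tmul_mul, ← Algebra.TensorProduct.one_def, one_mul]

theorem commute_tmul_one (p : S) (z : S ⊗[K] ExteriorAlgebra K M) : Commute (p ⊗ₜ[K] 1) z :=
  Algebra.commutes p z

variable (K S M) in
/-- The `S`-module of forms of degree `n`. -/
noncomputable abbrev forms (n : ℕ) : Submodule S (S ⊗[K] ExteriorAlgebra K M) :=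
  (⋀[K]^n M).baseChange S

theorem forms_eq_span (n : ℕ) :
    forms K S M n = Submodule.span S (Set.range fun v ↦ 1 ⊗ₜ[K] ExteriorAlgebra.ιMulti K n v) := by
  rw [forms, ← ExteriorAlgebra.ιMulti_span_fixedDegree, Submodule.baseChange_span, ← Set.range_comp]
  rfl

theorem mul_mem_forms_add {x y : S ⊗[K] ExteriorAlgebra K M} (hx : x ∈ forms K S M m)
    (hy : y ∈ forms K S M n) : x * y ∈ forms K S M (m + n) := by
  have h : forms K S M m * forms K S M n ≤ forms K S M (m + n) := by
    rw [forms, forms, Submodule.baseChange_eq_span, Submodule.baseChange_eq_span,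
      Submodule.span_mul_span, Submodule.span_le]
    rintro _ ⟨_, ⟨u, hu, rfl⟩, _, ⟨v, hv, rfl⟩, rfl⟩
    simpa using Submodule.tmul_mem_baseChange_of_mem 1 (SetLike.mul_mem_graded hu hv)
  exact h (Submodule.mul_mem_mul hx hy)

theorem formCoeff_eq_zero_of_mem_forms (ω : M [⋀^Fin k]→ₗ[K] K) (h : n ≠ k)
    {x : S ⊗[K] ExteriorAlgebra K M} (hx : x ∈ forms K S M n) : formCoeff ω x = 0 := by
  rw [forms_eq_span] at hx
  induction hx using Submodule.span_induction with
  | mem x hx =>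
    obtain ⟨v, rfl⟩ := hx
    simp [formCoeff_tmul, alternatingCoeff_ιMulti_of_ne ω h]
  | zero => exact map_zero _
  | add x y _ _ hx hy => rw [map_add, hx, hy, add_zero]
  | smul p x _ hx => rw [map_smul, hx, smul_zero]

theorem formCoeff_mul_eq_zero_of_mem_forms (ω : M [⋀^Fin k]→ₗ[K] K) (h : k < n)
    {x : S ⊗[K] ExteriorAlgebra K M} (hx : x ∈ forms K S M n) (z : S ⊗[K] ExteriorAlgebra K M) :
    formCoeff ω (x * z) = 0 := by
  rw [forms_eq_span] at hx
  induction hx using Submodule.span_induction with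
  | mem x hx =>
    obtain ⟨v, rfl⟩ := hx
    induction z with
    | zero => simp
    | add y z hy hz => rw [mul_add, map_add, hy, hz, add_zero]
    | tmul q u => simp [formCoeff_tmul, alternatingCoeff_ιMulti_mul_of_lt ω h]
  | zero => simp
  | add x y _ _ hx hy => rw [add_mul, map_add, hx, hy, add_zero]
  | smul p x _ hx => rw [smul_mul_assoc, map_smul, hx, smul_zero]

theorem formCoeff_mul_of_mem_forms (ω : M [⋀^Fin k]→ₗ[K] K)
    {x : S ⊗[K] ExteriorAlgebra K M} (hx : x ∈ forms K S M k) (z : S ⊗[K] ExteriorAlgebra K M) :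
    formCoeff ω (x * z) =
      formCoeff ω x * formCoeff (unitForm K M) z := by
  rw [forms_eq_span] at hx
  induction hx using Submodule.span_induction with
  | mem x hx =>
    obtain ⟨v, rfl⟩ := hx
    induction z with
    | zero => simp
    | add y z hy hz => rw [mul_add, map_add, hy, hz, map_add, mul_add]
    | tmul q u =>
      simp [formCoeff_tmul, alternatingCoeff_ιMulti_mul, alternatingCoeff_ιMulti, mul_smul,
        smul_comm (ω v)]
  | zero => simp
  | add x y _ _ hx hy => rw [add_mul, map_add, hx, hy, map_add, add_mul]
  | smul p x _ hx => rw [smul_mul_assoc, map_smul, hx, map_smul, smul_mul_assoc]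

end Forms

section CoordinateForms

variable {K S ι : Type*} [CommRing K] [CommRing S] [Algebra K S] {k : ℕ}

/-- The alternating form `v ↦ det (v i (s j))`, whose associated coefficient is that of
`y_{s 0} ⋯ y_{s (k-1)}`. -/
noncomputable def minorForm (s : Fin k → ι) : (ι → K) [⋀^Fin k]→ₗ[K] K :=
  Matrix.detRowAlternating.compLinearMap (LinearMap.funLeft K K s)

theorem minorForm_apply (s : Fin k → ι) (v : Fin k → ι → K) :
    minorForm s v = (Matrix.of fun i j ↦ v i (s j)).det :=
  rfl

variable [DecidableEq ι]

theorem alternatingCoeff_minorForm_ι (s i : ι) :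
    alternatingCoeff (minorForm ![s]) (ExteriorAlgebra.ι K (Pi.single i (1 : K))) =
      if i = s then 1 else 0 := by
  have h : ExteriorAlgebra.ι K (Pi.single i (1 : K)) =
      ExteriorAlgebra.ιMulti K 1 ![(Pi.single i 1 : ι → K)] := by
    simp [ExteriorAlgebra.ιMulti_apply]
  rw [h, alternatingCoeff_ιMulti, minorForm_apply]
  simp [Pi.single_apply, eq_comm]

theorem alternatingCoeff_minorForm_ι_mul_ι (s t i j : ι) :
    alternatingCoeff (minorForm ![s, t]) (ExteriorAlgebra.ι K (Pi.single i (1 : K)) *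
        ExteriorAlgebra.ι K (Pi.single j (1 : K))) =
      (if i = s ∧ j = t then 1 else 0) - if i = t ∧ j = s then 1 else 0 := by
  have h : ExteriorAlgebra.ι K (Pi.single i (1 : K)) * ExteriorAlgebra.ι K (Pi.single j (1 : K)) =
      ExteriorAlgebra.ιMulti K 2 ![(Pi.single i 1 : ι → K), Pi.single j 1] := by
    simp [ExteriorAlgebra.ιMulti_apply]
  rw [h, alternatingCoeff_ιMulti, minorForm_apply]
  simp [Matrix.det_fin_two, Pi.single_apply, ← ite_and, and_comm, eq_comm]

variable [Fintype ι]

variable (K) in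
/-- The `1`-form `∑ i, α i dxᵢ`. -/
noncomputable def oneForm (α : ι → S) : S ⊗[K] ExteriorAlgebra K (ι → K) :=
  ∑ i, α i ⊗ₜ ExteriorAlgebra.ι K (Pi.single i 1)

theorem oneForm_mem_forms (α : ι → S) : oneForm K α ∈ forms K S (ι → K) 1 := by
  refine Submodule.sum_mem _ fun i _ ↦ Submodule.tmul_mem_baseChange_of_mem _ ?_
  rw [ExteriorAlgebra.exteriorPower, pow_one]
  exact LinearMap.mem_range_self _ _

theorem formCoeff_oneForm (s : ι) (α : ι → S) :
    formCoeff (minorForm ![s]) (oneForm K α) = α s := by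
  simp [oneForm, formCoeff_tmul, alternatingCoeff_minorForm_ι]

theorem formCoeff_oneForm_mul_oneForm (s t : ι) (α β : ι → S) :
    formCoeff (minorForm ![s, t]) (oneForm K α * oneForm K β) = α s * β t - α t * β s := by
  simp [oneForm, Finset.sum_mul_sum, formCoeff_tmul, alternatingCoeff_minorForm_ι_mul_ι, sub_smul,
    ite_and, Finset.sum_ite_eq']

end CoordinateForms

section Coefficients

variable {K : Type*} [CommSemiring K]

/-- The coefficient of `x₁ᵃ x₂ᵇ x₃ᶜ` in a polynomial in three variables. -/
noncomputable def coeff₃ (a b c : ℕ) : MvPolynomial (Fin 3) K →ₗ[K] K :=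
  MvPolynomial.lcoeff K (Finsupp.equivFunOnFinite.symm ![a, b, c])

theorem coeff₃_X_mul (a b c : ℕ) (i : Fin 3) (f : MvPolynomial (Fin 3) K) :
    coeff₃ a b c (X i * f) = if ![a, b, c] i = 0 then 0 else
      coeff₃ (a - if i = 0 then 1 else 0) (b - if i = 1 then 1 else 0)
        (c - if i = 2 then 1 else 0) f := by
  have h : Finsupp.equivFunOnFinite.symm ![a, b, c] - Finsupp.single i 1 =
      Finsupp.equivFunOnFinite.symm ![a - if i = 0 then 1 else 0, b - if i = 1 then 1 else 0,
        c - if i = 2 then 1 else 0] := by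
    ext k
    fin_cases i <;> fin_cases k <;> simp
  simp [coeff₃, MvPolynomial.lcoeff, MvPolynomial.coeff_X_mul', h]

theorem coeff₃_one (a b c : ℕ) :
    coeff₃ a b c (1 : MvPolynomial (Fin 3) K) = if a = 0 ∧ b = 0 ∧ c = 0 then 1 else 0 := by
  have h : 0 = Finsupp.equivFunOnFinite.symm ![a, b, c] ↔ a = 0 ∧ b = 0 ∧ c = 0 := by
    rw [Finsupp.ext_iff]
    simp [Fin.forall_fin_succ, eq_comm]
  simp [coeff₃, MvPolynomial.lcoeff, MvPolynomial.coeff_one, h]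

theorem coeff₃_X (a b c : ℕ) (i : Fin 3) :
    coeff₃ a b c (X i : MvPolynomial (Fin 3) K) = if ![a, b, c] i = 0 then 0 else
      coeff₃ (a - if i = 0 then 1 else 0) (b - if i = 1 then 1 else 0)
        (c - if i = 2 then 1 else 0) (1 : MvPolynomial (Fin 3) K) := by
  rw [← coeff₃_X_mul, mul_one]

end Coefficients

/-- The `2`-form `β₀ y₂y₃ + β₁ y₃y₁ + β₂ y₁y₂`. -/
noncomputable def twoForm (β : Fin 3 → S3) : Rf :=
  β 0 ⊗ₜ (yy 1 * yy 2) + β 1 ⊗ₜ (yy 2 * yy 0) + β 2 ⊗ₜ (yy 0 * yy 1)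

theorem yy_mem_exteriorPower (s : Fin 3) : yy s ∈ ⋀[F3]^1 (Fin 3 → F3) := by
  rw [ExteriorAlgebra.exteriorPower, pow_one]
  exact LinearMap.mem_range_self _ _

theorem twoForm_mem_forms (β : Fin 3 → S3) : twoForm β ∈ forms F3 S3 (Fin 3 → F3) 2 := by
  have h (p : S3) (s t : Fin 3) : p ⊗ₜ (yy s * yy t) ∈ forms F3 S3 (Fin 3 → F3) 2 :=
    Submodule.tmul_mem_baseChange_of_mem _
      (SetLike.mul_mem_graded (yy_mem_exteriorPower s) (yy_mem_exteriorPower t))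
  exact add_mem (add_mem (h _ _ _) (h _ _ _)) (h _ _ _)

theorem formCoeff_twoForm (β : Fin 3 → S3) : formCoeff (minorForm ![1, 2]) (twoForm β) = β 0 := by
  simp [twoForm, yy, formCoeff_tmul, alternatingCoeff_minorForm_ι_mul_ι]

theorem y123_eq_ιMulti :
    y123 = ExteriorAlgebra.ιMulti F3 3 fun s : Fin 3 ↦ (Pi.single s 1 : Fin 3 → F3) := by
  rw [ExteriorAlgebra.ιMulti_apply]
  simp [y123, yy, List.ofFn_succ, mul_assoc]

theorem alternatingCoeff_y123 : alternatingCoeff (minorForm ![0, 1, 2]) y123 = 1 := by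
  rw [y123_eq_ιMulti, alternatingCoeff_ιMulti, minorForm_apply]
  decide

/-- The fourteen generators sorted by degree as forms. -/
inductive GenIndex
  | function (a : Fin 4)
  | one (c : Fin 6)
  | two (d : Fin 3)
  | top

/-- The generators `a₁, a₂, a₃, b` of form degree `0`. -/
noncomputable def functionGen : Fin 4 → S3 := ![a1, a2, a3, bP]

/-- The coefficients of `y₁, y₂, y₃` in `c₁, …, c₆`. -/
noncomputable def oneGen : Fin 6 → Fin 3 → S3 :=
  ![![X 0, X 1, X 2], ![X 1 * X 2, X 2 * X 0, X 0 * X 1], ![X 0 ^ 3, X 1 ^ 3, X 2 ^ 3],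
    ![X 0 * X 1 ^ 2, X 1 * X 2 ^ 2, X 2 * X 0 ^ 2],
    ![X 1 ^ 3 * X 2, X 2 ^ 3 * X 0, X 0 ^ 3 * X 1],
    ![X 0 ^ 3 * X 1 ^ 2, X 1 ^ 3 * X 2 ^ 2, X 2 ^ 3 * X 0 ^ 2]]

/-- The coefficients of `y₂y₃, y₃y₁, y₁y₂` in `d₁, d₂, d₃`. -/
noncomputable def twoGen : Fin 3 → Fin 3 → S3 :=
  ![![X 0, X 1, X 2], ![X 1 * X 2, X 2 * X 0, X 0 * X 1], ![X 0 ^ 3, X 1 ^ 3, X 2 ^ 3]]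

namespace GenIndex

/-- The position of a generator in the list `gens`. -/
def toFin : GenIndex → Fin 14
  | function a => a.castLE (by decide)
  | one c => (c.natAdd 4).castLE (by decide)
  | two d => (d.natAdd 10).castLE (by decide)
  | top => 13

theorem toFin_surjective : Function.Surjective toFin := by
  intro i
  fin_cases i
  exacts [⟨function 0, rfl⟩, ⟨function 1, rfl⟩, ⟨function 2, rfl⟩, ⟨function 3, rfl⟩, ⟨one 0, rfl⟩,
    ⟨one 1, rfl⟩, ⟨one 2, rfl⟩, ⟨one 3, rfl⟩, ⟨one 4, rfl⟩, ⟨one 5, rfl⟩, ⟨two 0, rfl⟩,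
    ⟨two 1, rfl⟩, ⟨two 2, rfl⟩, ⟨top, rfl⟩]

/-- The degree of a generator as a form. -/
def degree : GenIndex → ℕ
  | function _ => 0
  | one _ => 1
  | two _ => 2
  | top => 3

/-- The generators of `R^G`, written through their coefficients. -/
noncomputable def form : GenIndex → Rf
  | function a => functionGen a ⊗ₜ 1
  | one c => oneForm F3 (oneGen c)
  | two d => twoForm (twoGen d)
  | top => 1 ⊗ₜ y123

theorem gens_toFin (x : GenIndex) : gens x.toFin = x.form := by
  rcases x with a | c | d | _
  · fin_cases a <;> rfl
  · rw [form, oneForm, Fin.sum_univ_three]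
    fin_cases c <;> rfl
  · fin_cases d <;> rfl
  · rfl

theorem form_mem_forms (x : GenIndex) : x.form ∈ forms F3 S3 (Fin 3 → F3) x.degree := by
  rcases x with a | c | d | _
  · exact Submodule.tmul_mem_baseChange_of_mem _
      (SetLike.one_mem_graded fun n ↦ ⋀[F3]^n (Fin 3 → F3))
  · exact oneForm_mem_forms _
  · exact twoForm_mem_forms _
  · rw [form, y123_eq_ιMulti]
    exact Submodule.tmul_mem_baseChange_of_mem _ (ExteriorAlgebra.ιMulti_range F3 3 ⟨_, rfl⟩)

end GenIndex

/-- Functionals on `S` which are dual to `a₁, a₂, a₃, b` and vanish on the square of the ideal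
generated by these. -/
noncomputable def functionDual : Fin 4 → (S3 →ₗ[F3] F3) :=
  ![coeff₃ 2 0 0, coeff₃ 1 1 1, coeff₃ 4 0 0 + coeff₃ 2 2 0,
    coeff₃ 4 2 0 - coeff₃ 2 4 0 - coeff₃ 6 0 0 + coeff₃ 0 6 0]

theorem functionDual_one (a : Fin 4) : functionDual a 1 = 0 := by
  fin_cases a <;> simp [functionDual, coeff₃_one]

theorem functionDual_functionGen (a b : Fin 4) :
    functionDual a (functionGen b) = if b = a then 1 else 0 := by
  fin_cases a <;> fin_cases b <;>
    simp [functionDual, functionGen, a1, a2, a3, bP, pow_succ, mul_assoc, coeff₃_X_mul, coeff₃_X,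
      coeff₃_one]

theorem functionDual_functionGen_mul_mul (a b c : Fin 4) (f : S3) :
    functionDual a (functionGen b * (functionGen c * f)) = 0 := by
  fin_cases a <;> fin_cases b <;> fin_cases c <;>
    simp [functionDual, functionGen, a1, a2, a3, bP, pow_succ, mul_assoc, mul_add, add_mul,
      coeff₃_X_mul] <;> grind

/-- Functionals on `S` which are dual to the `y₁`-coefficients of `c₁, …, c₆` and vanish on the
ideal generated by `a₁, a₂, a₃, b`. -/
noncomputable def oneDual : Fin 6 → (S3 →ₗ[F3] F3) :=
  ![coeff₃ 1 0 0, coeff₃ 0 1 1, coeff₃ 3 0 0 - coeff₃ 1 0 2, coeff₃ 1 2 0 - coeff₃ 1 0 2,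
    coeff₃ 0 3 1 - coeff₃ 0 1 3, coeff₃ 3 2 0 - coeff₃ 1 4 0 - coeff₃ 3 0 2 + coeff₃ 1 0 4]

theorem oneDual_oneGen (c e : Fin 6) : oneDual c (oneGen e 0) = if e = c then 1 else 0 := by
  fin_cases c <;> fin_cases e <;>
    simp [oneDual, oneGen, pow_succ, mul_assoc, coeff₃_X_mul, coeff₃_X, coeff₃_one]

theorem oneDual_functionGen_mul (c : Fin 6) (a : Fin 4) (f : S3) :
    oneDual c (functionGen a * f) = 0 := by
  fin_cases c <;> fin_cases a <;>
    simp [oneDual, functionGen, a1, a2, a3, bP, pow_succ, mul_assoc, add_mul, coeff₃_X_mul]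

/-- Functionals on `S` which are dual to the `y₂y₃`-coefficients of `d₁, d₂, d₃` and vanish on the
ideal generated by `a₁, a₂, a₃, b` and the `y₂y₃`-coefficients of the products `cᵢcⱼ`. -/
noncomputable def twoDual : Fin 3 → (S3 →ₗ[F3] F3) :=
  ![coeff₃ 1 0 0, coeff₃ 0 1 1, coeff₃ 3 0 0 + coeff₃ 1 2 0 + coeff₃ 1 0 2]

theorem twoDual_twoGen (d e : Fin 3) : twoDual d (twoGen e 0) = if e = d then 1 else 0 := by
  fin_cases d <;> fin_cases e <;>
    simp [twoDual, twoGen, pow_succ, mul_assoc, coeff₃_X_mul, coeff₃_X, coeff₃_one]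

theorem twoDual_functionGen_mul (d : Fin 3) (a : Fin 4) (f : S3) :
    twoDual d (functionGen a * f) = 0 := by
  fin_cases d <;> fin_cases a <;>
    simp [twoDual, functionGen, a1, a2, a3, bP, pow_succ, mul_assoc, add_mul, coeff₃_X_mul]
  grind

theorem twoDual_oneGen_minor_mul (d : Fin 3) (c e : Fin 6) (f : S3) :
    twoDual d ((oneGen c 1 * oneGen e 2 - oneGen c 2 * oneGen e 1) * f) = 0 := by
  fin_cases d <;> fin_cases c <;> fin_cases e <;>
    simp [twoDual, oneGen, pow_succ, mul_assoc, sub_mul, coeff₃_X_mul]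

theorem coeff₃_zero_functionGen_mul (a : Fin 4) (f : S3) :
    coeff₃ 0 0 0 (functionGen a * f) = 0 := by
  fin_cases a <;>
    simp [functionGen, a1, a2, a3, bP, pow_succ, mul_assoc, add_mul, coeff₃_X_mul]

theorem coeff₃_zero_oneGen_mul (c : Fin 6) (s : Fin 3) (f : S3) :
    coeff₃ 0 0 0 (oneGen c s * f) = 0 := by
  fin_cases c <;> fin_cases s <;> simp [oneGen, pow_succ, mul_assoc, coeff₃_X_mul]

theorem coeff₃_zero_twoGen_mul (d s : Fin 3) (f : S3) : coeff₃ 0 0 0 (twoGen d s * f) = 0 := by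
  fin_cases d <;> fin_cases s <;> simp [twoGen, pow_succ, mul_assoc, coeff₃_X_mul]

section FormDual

variable {K S M : Type*} [CommRing K] [CommRing S] [Algebra K S] [AddCommGroup M] [Module K M]
  {k n : ℕ}

/-- The functional on forms which applies `ψ` to the coefficient extracted by `ω`. -/
noncomputable def formDual (ω : M [⋀^Fin k]→ₗ[K] K) (ψ : S →ₗ[K] K) :
    S ⊗[K] ExteriorAlgebra K M →ₗ[K] K :=
  ψ ∘ₗ (formCoeff ω).restrictScalars K

theorem formDual_apply (ω : M [⋀^Fin k]→ₗ[K] K) (ψ : S →ₗ[K] K)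
    (z : S ⊗[K] ExteriorAlgebra K M) : formDual ω ψ z = ψ (formCoeff ω z) :=
  rfl

theorem formDual_eq_zero_of_mem_forms (ω : M [⋀^Fin k]→ₗ[K] K) (ψ : S →ₗ[K] K) (h : n ≠ k)
    {x : S ⊗[K] ExteriorAlgebra K M} (hx : x ∈ forms K S M n) : formDual ω ψ x = 0 := by
  rw [formDual_apply, formCoeff_eq_zero_of_mem_forms ω h hx, map_zero]

theorem formDual_mul_eq_zero_of_mem_forms (ω : M [⋀^Fin k]→ₗ[K] K) (ψ : S →ₗ[K] K) (h : k < n)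
    {x : S ⊗[K] ExteriorAlgebra K M} (hx : x ∈ forms K S M n) (z : S ⊗[K] ExteriorAlgebra K M) :
    formDual ω ψ (x * z) = 0 := by
  rw [formDual_apply, formCoeff_mul_eq_zero_of_mem_forms ω h hx, map_zero]

end FormDual

namespace GenIndex

theorem eq_function_or_degree_pos (x : GenIndex) : (∃ a, x = function a) ∨ 0 < x.degree := by
  cases x <;> simp [degree]

theorem formDual_functionDual_form_mul_form_mul (a : Fin 4) (x y : GenIndex) (z : Rf) :
    formDual (unitForm F3 (Fin 3 → F3)) (functionDual a) (x.form * y.form * z) = 0 := by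
  obtain ⟨b, rfl⟩ | hx := x.eq_function_or_degree_pos
  · obtain ⟨c, rfl⟩ | hy := y.eq_function_or_degree_pos
    · rw [mul_assoc, form, form, formDual_apply, formCoeff_tmul_one_mul, formCoeff_tmul_one_mul,
        functionDual_functionGen_mul_mul]
    · rw [form, (commute_tmul_one _ _).eq, mul_assoc]
      exact formDual_mul_eq_zero_of_mem_forms _ _ hy y.form_mem_forms _
  · rw [mul_assoc]
    exact formDual_mul_eq_zero_of_mem_forms _ _ hx x.form_mem_forms _

theorem formDual_form_mul_form_mul {k : ℕ} (ω : (Fin 3 → F3) [⋀^Fin k]→ₗ[F3] F3)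
    {ψ : S3 →ₗ[F3] F3} (hψ : ∀ a f, ψ (functionGen a * f) = 0)
    (hpos : ∀ x y : GenIndex, 0 < x.degree → 0 < y.degree → x.degree + y.degree ≤ k →
      ∀ z, formDual ω ψ (x.form * y.form * z) = 0) (x y : GenIndex) (z : Rf) :
    formDual ω ψ (x.form * y.form * z) = 0 := by
  obtain ⟨a, rfl⟩ | hx := x.eq_function_or_degree_pos
  · rw [mul_assoc, form, formDual_apply, formCoeff_tmul_one_mul, hψ]
  obtain ⟨a, rfl⟩ | hy := y.eq_function_or_degree_pos
  · rw [form, ← (commute_tmul_one _ _).eq, mul_assoc, formDual_apply, formCoeff_tmul_one_mul, hψ]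
  obtain hk | hk := le_or_gt (x.degree + y.degree) k
  · exact hpos x y hx hy hk z
  · exact formDual_mul_eq_zero_of_mem_forms ω ψ hk
      (mul_mem_forms_add x.form_mem_forms y.form_mem_forms) z

theorem formDual_coeff₃_zero_form_mul {k : ℕ} (ω : (Fin 3 → F3) [⋀^Fin k]→ₗ[F3] F3) {x : GenIndex}
    (hx : x ≠ top) (z : Rf) : formDual ω (coeff₃ 0 0 0) (x.form * z) = 0 := by
  rcases x with a | c | d | _
  · rw [form, formDual_apply, formCoeff_tmul_one_mul, coeff₃_zero_functionGen_mul]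
  · simp [formDual_apply, form, oneForm, Finset.sum_mul, formCoeff_tmul_mul ω (oneGen c _),
      coeff₃_zero_oneGen_mul]
  · simp [formDual_apply, form, twoForm, add_mul, formCoeff_tmul_mul ω (twoGen d _),
      coeff₃_zero_twoGen_mul]
  · exact absurd rfl hx

theorem formDual_twoDual_one_form_mul_one_form_mul (d : Fin 3) (c e : Fin 6) (z : Rf) :
    formDual (minorForm ![1, 2]) (twoDual d) ((one c).form * (one e).form * z) = 0 := by
  rw [form, form, formDual_apply, formCoeff_mul_of_mem_forms _ (mul_mem_forms_add
    (oneForm_mem_forms _) (oneForm_mem_forms _)), formCoeff_oneForm_mul_oneForm,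
    twoDual_oneGen_minor_mul]

/-- The functional on `R` that separates a generator from the other generators and from the products
of two generators. -/
noncomputable def dual : GenIndex → (Rf →ₗ[F3] F3)
  | function a => formDual (unitForm F3 (Fin 3 → F3)) (functionDual a)
  | one c => formDual (minorForm ![0]) (oneDual c)
  | two d => formDual (minorForm ![1, 2]) (twoDual d)
  | top => formDual (minorForm ![0, 1, 2]) (coeff₃ 0 0 0)

theorem dual_eq_zero_of_mem_forms {x : GenIndex} {n : ℕ} (h : n ≠ x.degree) {z : Rf}
    (hz : z ∈ forms F3 S3 (Fin 3 → F3) n) : x.dual z = 0 := by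
  cases x <;> exact formDual_eq_zero_of_mem_forms _ _ h hz

theorem dual_function_tmul_one (a : Fin 4) (f : S3) :
    (function a).dual (f ⊗ₜ 1) = functionDual a f := by
  rw [dual, formDual_apply, formCoeff_tmul, alternatingCoeff_unitForm_one, one_smul]

theorem dual_one_oneForm (c : Fin 6) (α : Fin 3 → S3) :
    (one c).dual (oneForm F3 α) = oneDual c (α 0) := by
  rw [dual, formDual_apply, formCoeff_oneForm]

theorem dual_two_twoForm (d : Fin 3) (β : Fin 3 → S3) :
    (two d).dual (twoForm β) = twoDual d (β 0) := by
  rw [dual, formDual_apply, formCoeff_twoForm]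

theorem dual_apply_one (x : GenIndex) : x.dual 1 = 0 := by
  have h : (1 : Rf) ∈ forms F3 S3 (Fin 3 → F3) 0 :=
    Submodule.tmul_mem_baseChange_of_mem _ (SetLike.one_mem_graded fun n ↦ ⋀[F3]^n (Fin 3 → F3))
  obtain ⟨a, rfl⟩ | hx := x.eq_function_or_degree_pos
  · exact (dual_function_tmul_one a 1).trans (functionDual_one a)
  · exact dual_eq_zero_of_mem_forms hx.ne h

theorem dual_form_self (x : GenIndex) : x.dual x.form = 1 := by
  rcases x with a | c | d | _
  · rw [form, dual_function_tmul_one, functionDual_functionGen, if_pos rfl]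
  · rw [form, dual_one_oneForm, oneDual_oneGen, if_pos rfl]
  · rw [form, dual_two_twoForm, twoDual_twoGen, if_pos rfl]
  · rw [form, dual, formDual_apply, formCoeff_tmul, alternatingCoeff_y123, one_smul, coeff₃_one]
    rfl

theorem dual_form_of_ne {x y : GenIndex} (h : y ≠ x) : x.dual y.form = 0 := by
  obtain hd | hd := ne_or_eq y.degree x.degree
  · exact dual_eq_zero_of_mem_forms hd y.form_mem_forms
  rcases x with a | c | d | _ <;> rcases y with b | e | f | _ <;>
    try simp [degree] at hd
  · rw [form, dual_function_tmul_one, functionDual_functionGen, if_neg (h <| congrArg function ·)]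
  · rw [form, dual_one_oneForm, oneDual_oneGen, if_neg (h <| congrArg one ·)]
  · rw [form, dual_two_twoForm, twoDual_twoGen, if_neg (h <| congrArg two ·)]
  · exact absurd rfl h

theorem dual_form_mul_form_mul (x y z : GenIndex) (w : Rf) :
    x.dual (y.form * z.form * w) = 0 := by
  rcases x with a | c | d | _
  · exact formDual_functionDual_form_mul_form_mul a y z w
  · exact formDual_form_mul_form_mul _ (oneDual_functionGen_mul c)
      (fun _ _ hx hy h ↦ absurd h (by lia)) y z w
  · refine formDual_form_mul_form_mul _ (twoDual_functionGen_mul d) (fun x y hx hy h ↦ ?_) y z w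
    obtain ⟨⟨c, rfl⟩, e, rfl⟩ : (∃ c, x = one c) ∧ ∃ e, y = one e := by
      cases x <;> cases y <;> simp_all [degree]
    exact formDual_twoDual_one_form_mul_one_form_mul d c e
  · refine formDual_form_mul_form_mul _ coeff₃_zero_functionGen_mul (fun x y hx hy h z ↦ ?_) y z w
    rw [mul_assoc]
    refine formDual_coeff₃_zero_form_mul _ ?_ _
    rintro rfl
    change 3 + y.degree ≤ 3 at h
    lia

end GenIndex

/-- The generating set `{a₁, a₂, a₃, b, c₁, …, c₆, d₁, d₂, d₃, y₁y₂y₃}` of `R^G` is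
minimal: none of the fourteen generators lies in the `𝔽₃`-subalgebra of `R` generated by
the remaining thirteen. -/
theorem stmt15 :
    ∀ i : Fin 14,
      gens i ∉ Algebra.adjoin F3 {x : Rf | ∃ j : Fin 14, j ≠ i ∧ x = gens j} := by
  intro i
  obtain ⟨x, rfl⟩ := GenIndex.toFin_surjective i
  refine notMem_adjoin_ne_of_dual x.dual x.dual_apply_one ?_ ?_ ?_
  · intro j hj
    obtain ⟨y, rfl⟩ := GenIndex.toFin_surjective j
    rw [GenIndex.gens_toFin]
    exact GenIndex.dual_form_of_ne (mt (congrArg GenIndex.toFin) hj)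
  · intro j k w
    obtain ⟨y, rfl⟩ := GenIndex.toFin_surjective j
    obtain ⟨z, rfl⟩ := GenIndex.toFin_surjective k
    rw [GenIndex.gens_toFin, GenIndex.gens_toFin]
    exact x.dual_form_mul_form_mul y z w
  · rw [GenIndex.gens_toFin, x.dual_form_self]
    exact one_ne_zero
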